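/- Let N_out be a function on bounded constraints, and define N_in by N_in(φ, B) := (opp(φ_N), B_N), where (φ_N, B_N) = N_out(opp(φ), B). Then N_out is an outer narrowing operator if and only if N_in is an inner narrowing operator. -/

import Mathlib

/-!
Negation normal form makes `opp` a syntactic involution whose semantics is complementation
(`QC.opp_opp`, `QC.sem_opp`). Conjugating an operator by `opp` therefore preserves the narrowing
axioms (`IsNarrowing.conj_opp`): contractance and monotonicity only concern the bound, soundness
is stable under complementing both constraints, and idempotence survives because the inner
`opp (opp ψ)` cancels. The outer condition at `opp φ` is the inner condition at `φ`. Since `opp` is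
an involution, `Nout` is in turn the conjugate of `Nin`, so both directions use the same lemma.
-/

open Set

/-- A closed real interval (possibly empty or unbounded): a closed, order-connected set. -/
def IsClosedInterval (s : Set ℝ) : Prop := IsClosed s ∧ s.OrdConnected

/-- The type of closed real intervals. -/
abbrev CInterval : Type := {s : Set ℝ // IsClosedInterval s}

/-- A box assignment: a function from the variables to closed real intervals. -/
structure Box (V : Type) where
  comp : V → CInterval

/-- The set of variable assignments represented by a box assignment. -/
def Box.pts {V : Type} (B : Box V) : Set (V → ℝ) := {d | ∀ v, d v ∈ (B.comp v).1}

/-- `B.upd x I` is the box assignment equal to `B` except that it assigns `I` to `x`. -/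
def Box.upd {V : Type} [DecidableEq V] (B : Box V) (x : V) (I : CInterval) : Box V :=
  ⟨Function.update B.comp x I⟩

/-- The smallest closed interval containing a set of reals. -/
def cIntHull (s : Set ℝ) : Set ℝ := ⋂₀ {t | IsClosedInterval t ∧ s ⊆ t}

theorem isClosedInterval_cIntHull (s : Set ℝ) : IsClosedInterval (cIntHull s) := by
  constructor
  · exact isClosed_sInter fun t ht => ht.1.1
  · constructor
    intro x hx y hy z hz
    rw [cIntHull, Set.mem_sInter] at *
    intro t ht
    exact ht.1.2.out (hx t ht) (hy t ht) hz

/-- The smallest box assignment containing a given set of variable assignments. -/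
noncomputable def canonBox {V : Type} (S : Set (V → ℝ)) : Box V :=
  ⟨fun v => ⟨cIntHull ((fun d => d v) '' S), isClosedInterval_cIntHull _⟩⟩

/-- The box union `B₁ ⊎ B₂`: the smallest box assignment containing both `B₁` and `B₂`. -/
noncomputable def boxUnion {V : Type} (B₁ B₂ : Box V) : Box V := canonBox (B₁.pts ∪ B₂.pts)

/-- Quantified constraints: atoms `f ≤ g`, `f < g`, `f ≥ g`, `f > g`, conjunction,
disjunction, and bounded quantifiers with closed-interval bounds (no negation). -/
inductive QC (V : Type) : Type where
  | le (f g : (V → ℝ) → ℝ)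
  | lt (f g : (V → ℝ) → ℝ)
  | ge (f g : (V → ℝ) → ℝ)
  | gt (f g : (V → ℝ) → ℝ)
  | conj (φ₁ φ₂ : QC V)
  | disj (φ₁ φ₂ : QC V)
  | exQ (x : V) (I : CInterval) (φ : QC V)
  | allQ (x : V) (I : CInterval) (φ : QC V)

/-- The semantics of a quantified constraint: the set of variable assignments making it true. -/
def QC.sem {V : Type} [DecidableEq V] : QC V → Set (V → ℝ)
  | .le f g => {d | f d ≤ g d}
  | .lt f g => {d | f d < g d}
  | .ge f g => {d | g d ≤ f d}
  | .gt f g => {d | g d < f d}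
  | .conj φ₁ φ₂ => φ₁.sem ∩ φ₂.sem
  | .disj φ₁ φ₂ => φ₁.sem ∪ φ₂.sem
  | .exQ x I φ => {d | ∃ r ∈ I.1, Function.update d x r ∈ φ.sem}
  | .allQ x I φ => {d | ∀ r ∈ I.1, Function.update d x r ∈ φ.sem}

/-- The opposite of a quantified constraint: negation pushed down to the atoms. -/
def QC.opp {V : Type} : QC V → QC V
  | .le f g => .gt f g
  | .lt f g => .ge f g
  | .ge f g => .lt f g
  | .gt f g => .le f g
  | .conj φ₁ φ₂ => .disj φ₁.opp φ₂.opp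
  | .disj φ₁ φ₂ => .conj φ₁.opp φ₂.opp
  | .exQ x I φ => .allQ x I φ.opp
  | .allQ x I φ => .exQ x I φ.opp

/-- Atomic constraints. -/
def QC.Atomic {V : Type} : QC V → Prop
  | .le _ _ => True
  | .lt _ _ => True
  | .ge _ _ => True
  | .gt _ _ => True
  | _ => False

/-- A narrowing operator on bounded constraints: contractant, sound, monotone, idempotent. -/
def IsNarrowing {V : Type} [DecidableEq V] (N : QC V × Box V → QC V × Box V) : Prop :=
  (∀ (φ : QC V) (B : Box V), ((N (φ, B)).2).pts ⊆ B.pts) ∧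
  (∀ (φ : QC V) (B : Box V),
    ((N (φ, B)).1).sem ∩ ((N (φ, B)).2).pts = φ.sem ∩ ((N (φ, B)).2).pts) ∧
  (∀ (φ : QC V) (B B' : Box V), B'.pts ⊆ B.pts → ((N (φ, B')).2).pts ⊆ ((N (φ, B)).2).pts) ∧
  (∀ (φ : QC V) (B : Box V), N (N (φ, B)) = N (φ, B))

/-- An outer narrowing operator removes only points outside the solution set. -/
def IsOuterNarrowing {V : Type} [DecidableEq V] (N : QC V × Box V → QC V × Box V) : Prop :=
  IsNarrowing N ∧ ∀ (φ : QC V) (B : Box V), B.pts ∩ φ.sem ⊆ ((N (φ, B)).2).pts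

/-- An inner narrowing operator removes only points inside the solution set. -/
def IsInnerNarrowing {V : Type} [DecidableEq V] (N : QC V × Box V → QC V × Box V) : Prop :=
  IsNarrowing N ∧ ∀ (φ : QC V) (B : Box V), B.pts \ φ.sem ⊆ ((N (φ, B)).2).pts

/-- A narrowing operator on atomic bounded constraints. -/
def IsAtomicNarrowing {V : Type} [DecidableEq V] (A : QC V × Box V → QC V × Box V) : Prop :=
  (∀ (φ : QC V) (B : Box V), φ.Atomic → ((A (φ, B)).1).Atomic) ∧
  (∀ (φ : QC V) (B : Box V), φ.Atomic → ((A (φ, B)).2).pts ⊆ B.pts) ∧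
  (∀ (φ : QC V) (B : Box V), φ.Atomic →
    ((A (φ, B)).1).sem ∩ ((A (φ, B)).2).pts = φ.sem ∩ ((A (φ, B)).2).pts) ∧
  (∀ (φ : QC V) (B B' : Box V), φ.Atomic → B'.pts ⊆ B.pts →
    ((A (φ, B')).2).pts ⊆ ((A (φ, B)).2).pts) ∧
  (∀ (φ : QC V) (B : Box V), φ.Atomic → A (A (φ, B)) = A (φ, B))

/-- An outer narrowing operator on atomic bounded constraints. -/
def IsAtomicOuterNarrowing {V : Type} [DecidableEq V] (A : QC V × Box V → QC V × Box V) : Prop :=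
  IsAtomicNarrowing A ∧
  ∀ (φ : QC V) (B : Box V), φ.Atomic → B.pts ∩ φ.sem ⊆ ((A (φ, B)).2).pts

/-- Finitely contracting: no infinite sequence of bounded constraints where each
constraint part is the output constraint and each bound is a strict subset of the
output bound of the previous application. -/
def FinitelyContracting {V : Type} (A : QC V × Box V → QC V × Box V) : Prop :=
  ¬ ∃ s : ℕ → QC V × Box V, ∀ k : ℕ,
      (s (k + 1)).1 = (A (s k)).1 ∧ (s (k + 1)).2.pts ⊂ ((A (s k)).2).pts

mutual
  /-- The pruning algorithm `N_A` lifted from an atomic narrowing operator `A`,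
  as a relation between inputs and outputs. -/
  inductive NRel {V : Type} [DecidableEq V] (A : QC V × Box V → QC V × Box V) :
      QC V × Box V → QC V × Box V → Prop where
    | atom {φ : QC V} {B : Box V} (h : φ.Atomic) : NRel A (φ, B) (A (φ, B))
    | conj {φ₁ φ₂ ψ₁ ψ₂ : QC V} {B B' : Box V} {n : ℕ} {c : ℕ → QC V × QC V × Box V}
        (h0 : c 0 = (φ₁, φ₂, B)) (hn : c n = (ψ₁, ψ₂, B'))
        (hstep : ∀ i : ℕ, i < n → ConjStep A (c i) (c (i + 1)))
        (hfix₁ : NRel A (ψ₁, B') (ψ₁, B'))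
        (hfix₂ : NRel A (ψ₂, B') (ψ₂, B')) :
        NRel A (QC.conj φ₁ φ₂, B) (QC.conj ψ₁ ψ₂, B')
    | disj {φ₁ φ₂ ψ₁ ψ₂ : QC V} {B B₁ B₂ : Box V}
        (h₁ : NRel A (φ₁, B) (ψ₁, B₁)) (h₂ : NRel A (φ₂, B) (ψ₂, B₂)) :
        NRel A (QC.disj φ₁ φ₂, B) (QC.disj ψ₁ ψ₂, boxUnion B₁ B₂)
    | exQ {x : V} {I : CInterval} {φ ψ : QC V} {B B' : Box V}
        (h : NRel A (φ, B.upd x I) (ψ, B')) :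
        NRel A (QC.exQ x I φ, B) (QC.exQ x (B'.comp x) ψ, B')
    | allQ {x : V} {I : CInterval} {φ ψ : QC V} {B B' : Box V}
        (h : NRel A (φ, B.upd x I) (ψ, B')) :
        NRel A (QC.allQ x I φ, B)
          (QC.allQ x I ψ, canonBox {d : V → ℝ | ∀ r ∈ I.1, Function.update d x r ∈ B'.pts})

  /-- One step of the fixpoint iteration in the conjunction case of `N_A`:
  prune one of the two conjuncts. -/
  inductive ConjStep {V : Type} [DecidableEq V] (A : QC V × Box V → QC V × Box V) :
      QC V × QC V × Box V → QC V × QC V × Box V → Prop where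
    | left {φ₁ φ₂ ψ₁ : QC V} {B B' : Box V} (h : NRel A (φ₁, B) (ψ₁, B')) :
        ConjStep A (φ₁, φ₂, B) (ψ₁, φ₂, B')
    | right {φ₁ φ₂ ψ₂ : QC V} {B B' : Box V} (h : NRel A (φ₂, B) (ψ₂, B')) :
        ConjStep A (φ₁, φ₂, B) (φ₁, ψ₂, B')
end

/-- The consistency property `C` on atomic constraints lifted to quantified constraints. -/
inductive Lift {V : Type} [DecidableEq V] (C : QC V → Box V → Prop) : QC V → Box V → Prop where
  | atom {φ : QC V} {B : Box V} (h : φ.Atomic) (hC : C φ B) : Lift C φ B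
  | conj {φ₁ φ₂ : QC V} {B : Box V} (h₁ : Lift C φ₁ B) (h₂ : Lift C φ₂ B) :
      Lift C (QC.conj φ₁ φ₂) B
  | disj {φ₁ φ₂ : QC V} {B B₁ B₂ : Box V} (hB : B.pts = (boxUnion B₁ B₂).pts)
      (h₁ : Lift C φ₁ B₁) (h₂ : Lift C φ₂ B₂) : Lift C (QC.disj φ₁ φ₂) B
  | exQ {x : V} {I : CInterval} {φ : QC V} {B : Box V} (h : Lift C φ (B.upd x I)) :
      Lift C (QC.exQ x I φ) B
  | allQ {x : V} {I : CInterval} {φ : QC V} {B : Box V} (h : Lift C φ (B.upd x I)) :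
      Lift C (QC.allQ x I φ) B

/-- The degree of truth of a quantified constraint, with values in the extended reals. -/
noncomputable def QC.deg {V : Type} [DecidableEq V] : QC V → (V → ℝ) → EReal
  | .le f g => fun d => ((g d - f d : ℝ) : EReal)
  | .lt f g => fun d => ((g d - f d : ℝ) : EReal)
  | .ge f g => fun d => ((f d - g d : ℝ) : EReal)
  | .gt f g => fun d => ((f d - g d : ℝ) : EReal)
  | .conj φ₁ φ₂ => fun d => min (φ₁.deg d) (φ₂.deg d)
  | .disj φ₁ φ₂ => fun d => max (φ₁.deg d) (φ₂.deg d)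
  | .exQ x I φ => fun d => ⨆ r ∈ I.1, φ.deg (Function.update d x r)
  | .allQ x I φ => fun d => ⨅ r ∈ I.1, φ.deg (Function.update d x r)

/-- A converging atomic (outer) narrowing operator. -/
def Converging {V : Type} [DecidableEq V] (A : QC V × Box V → QC V × Box V) : Prop :=
  ∀ φ : QC V, φ.Atomic → ∀ Bs : ℕ → Box V,
    (∀ i, (Bs (i + 1)).pts ⊆ (Bs i).pts) →
    ∀ d : V → ℝ, (⋂ i, (Bs i).pts) = {d} → φ.deg d < 0 →
    ∃ k, ∀ l, k ≤ l → ((A (φ, Bs l)).2).pts = ∅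

/-- One branching step: split a quantifier bound of some subconstraint. -/
inductive Branch {V : Type} : QC V → QC V → Prop where
  | allSplit {x : V} {I I₁ I₂ : CInterval} {φ : QC V} (h : I.1 = I₁.1 ∪ I₂.1) :
      Branch (QC.allQ x I φ) (QC.conj (QC.allQ x I₁ φ) (QC.allQ x I₂ φ))
  | exSplit {x : V} {I I₁ I₂ : CInterval} {φ : QC V} (h : I.1 = I₁.1 ∪ I₂.1) :
      Branch (QC.exQ x I φ) (QC.disj (QC.exQ x I₁ φ) (QC.exQ x I₂ φ))
  | conjL {φ₁ φ₁' φ₂ : QC V} (h : Branch φ₁ φ₁') : Branch (QC.conj φ₁ φ₂) (QC.conj φ₁' φ₂)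
  | conjR {φ₁ φ₂ φ₂' : QC V} (h : Branch φ₂ φ₂') : Branch (QC.conj φ₁ φ₂) (QC.conj φ₁ φ₂')
  | disjL {φ₁ φ₁' φ₂ : QC V} (h : Branch φ₁ φ₁') : Branch (QC.disj φ₁ φ₂) (QC.disj φ₁' φ₂)
  | disjR {φ₁ φ₂ φ₂' : QC V} (h : Branch φ₂ φ₂') : Branch (QC.disj φ₁ φ₂) (QC.disj φ₁ φ₂')
  | exCong {x : V} {I : CInterval} {φ φ' : QC V} (h : Branch φ φ') :
      Branch (QC.exQ x I φ) (QC.exQ x I φ')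
  | allCong {x : V} {I : CInterval} {φ φ' : QC V} (h : Branch φ φ') :
      Branch (QC.allQ x I φ) (QC.allQ x I φ')

/-- All quantification intervals of the constraint have diameter (length) at most `ε`. -/
def QC.smallQ {V : Type} (ε : ENNReal) : QC V → Prop
  | .conj φ₁ φ₂ => φ₁.smallQ ε ∧ φ₂.smallQ ε
  | .disj φ₁ φ₂ => φ₁.smallQ ε ∧ φ₂.smallQ ε
  | .exQ _ I φ => EMetric.diam I.1 ≤ ε ∧ φ.smallQ ε
  | .allQ _ I φ => EMetric.diam I.1 ≤ ε ∧ φ.smallQ ε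
  | _ => True

/-- The box assignment assigning all of ℝ to every variable. -/
def topBox (V : Type) : Box V :=
  ⟨fun _ => ⟨Set.univ, ⟨isClosed_univ, Set.ordConnected_univ⟩⟩⟩

theorem QC.opp_opp {V : Type} (φ : QC V) : φ.opp.opp = φ := by
  induction φ <;> simp_all [QC.opp]

theorem QC.sem_opp {V : Type} [DecidableEq V] (φ : QC V) : φ.opp.sem = φ.semᶜ := by
  induction φ with
  | le f g | lt f g | ge f g | gt f g => ext d; simp [QC.opp, QC.sem]
  | conj φ₁ φ₂ h₁ h₂ => simp [QC.opp, QC.sem, h₁, h₂, Set.compl_inter]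
  | disj φ₁ φ₂ h₁ h₂ => simp [QC.opp, QC.sem, h₁, h₂, Set.compl_union]
  | exQ x I φ h | allQ x I φ h => ext d; simp [QC.opp, QC.sem, h]

/-- Conjugating a narrowing operator by `opp` yields a narrowing operator. -/
theorem IsNarrowing.conj_opp {V : Type} [DecidableEq V] {N M : QC V × Box V → QC V × Box V}
    (hM : ∀ (φ : QC V) (B : Box V), M (φ, B) = ((N (φ.opp, B)).1.opp, (N (φ.opp, B)).2))
    (hN : IsNarrowing N) : IsNarrowing M := by
  obtain ⟨hc, hs, hm, hi⟩ := hN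
  refine ⟨fun φ B => ?_, fun φ B => ?_, fun φ B B' h => ?_, fun φ B => ?_⟩
  · simpa only [hM] using hc φ.opp B
  · ext d
    have h := Set.ext_iff.mp (hs φ.opp B) d
    simp only [hM, QC.sem_opp, Set.mem_inter_iff, Set.mem_compl_iff] at h ⊢
    tauto
  · simpa only [hM] using hm φ.opp B B' h
  · simp only [hM, QC.opp_opp, Prod.mk.eta, hi]

theorem outer_iff_inner {V : Type} [DecidableEq V]
    (Nout Nin : QC V × Box V → QC V × Box V)
    (hdef : ∀ (φ : QC V) (B : Box V),
      Nin (φ, B) = ((Nout (QC.opp φ, B)).1.opp, (Nout (QC.opp φ, B)).2)) :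
    IsOuterNarrowing Nout ↔ IsInnerNarrowing Nin := by
  have hdef' : ∀ (φ : QC V) (B : Box V),
      Nout (φ, B) = ((Nin (φ.opp, B)).1.opp, (Nin (φ.opp, B)).2) := fun φ B => by
    simp only [hdef, QC.opp_opp, Prod.mk.eta]
  constructor
  · rintro ⟨hN, hO⟩
    refine ⟨hN.conj_opp hdef, fun φ B => ?_⟩
    simpa only [hdef, QC.sem_opp, Set.sdiff_eq] using hO φ.opp B
  · rintro ⟨hN, hI⟩
    refine ⟨hN.conj_opp hdef', fun φ B => ?_⟩
    simpa only [hdef', QC.sem_opp, Set.sdiff_eq, compl_compl] using hI φ.opp B
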